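/- Let (X,d) be a metric space and let W ⊆ U be domains in X, with inner metrics d_W on W and d_U on U. Let a ∈ U and r > 0 be such that every point x ∈ U with d_U(a,x) < 3r belongs to W. Then for all y, z ∈ U with d_U(a,y) < r and d_U(a,z) < r, one has d_W(y,z) = d_U(y,z). -/

import Mathlib

open Set Metric MeasureTheory ENNReal

noncomputable section

/-- The length of the curve `γ : [0,1] → X`, defined as the supremum of sums
`∑ d(γ(t_i), γ(t_{i-1}))` over partitions `0 ≤ t₀ < … < t_k ≤ 1`. -/
def curveLength {X : Type*} [PseudoEMetricSpace X] (γ : ℝ → X) : ℝ≥0∞ :=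
  eVariationOn γ (Set.Icc 0 1)

/-- `γ` is a continuous curve in `Ω` from `x` to `y`. -/
def IsCurveIn {X : Type*} [PseudoEMetricSpace X] (Ω : Set X) (x y : X) (γ : ℝ → X) : Prop :=
  ContinuousOn γ (Set.Icc 0 1) ∧ Set.MapsTo γ (Set.Icc 0 1) Ω ∧ γ 0 = x ∧ γ 1 = y

/-- The inner (pseudo)metric of `Ω`: the infimum of lengths of continuous curves
joining `x` to `y` inside `Ω`. -/
def innerDist {X : Type*} [PseudoEMetricSpace X] (Ω : Set X) (x y : X) : ℝ≥0∞ :=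
  ⨅ (γ : ℝ → X) (_ : IsCurveIn Ω x y γ), curveLength γ

/-- `γ : [0,1] → Ω` is a `(c,C)`-inner uniform curve in `Ω`. -/
def IsInnerUniformCurve {X : Type*} [PseudoEMetricSpace X] (c C : ℝ) (Ω : Set X)
    (γ : ℝ → X) : Prop :=
  ContinuousOn γ (Set.Icc 0 1) ∧ Set.MapsTo γ (Set.Icc 0 1) Ω ∧
    curveLength γ ≤ ENNReal.ofReal C * innerDist Ω (γ 0) (γ 1) ∧
    ∀ t ∈ Set.Icc (0:ℝ) 1,
      ENNReal.ofReal c * min (innerDist Ω (γ 0) (γ t)) (innerDist Ω (γ t) (γ 1)) ≤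
        EMetric.infEdist (γ t) Ωᶜ

/-- `Ω` is a `(c,C)`-inner uniform domain. -/
def IsInnerUniformDomain {X : Type*} [PseudoEMetricSpace X] (c C : ℝ) (Ω : Set X) : Prop :=
  IsOpen Ω ∧ IsConnected Ω ∧
    ∀ x ∈ Ω, ∀ y ∈ Ω, ∃ γ : ℝ → X, IsInnerUniformCurve c C Ω γ ∧ γ 0 = x ∧ γ 1 = y

theorem innerDist_le_of_curve {X : Type*} [PseudoEMetricSpace X] {Ω : Set X} {x y : X} {γ : ℝ → X}
    (h : IsCurveIn Ω x y γ) : innerDist Ω x y ≤ curveLength γ := iInf₂_le γ h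

theorem innerDist_symm_le {X : Type*} [PseudoEMetricSpace X] (Ω : Set X) (x y : X) :
    innerDist Ω x y ≤ innerDist Ω y x := by
  refine le_iInf₂ fun γ h => ?_
  obtain ⟨hc, hm, h0, h1⟩ := h
  have hmaps : MapsTo (fun t : ℝ => 1 - t) (Icc 0 1) (Icc 0 1) := by
    intro t ht
    exact ⟨by linarith [ht.2], by linarith [ht.1]⟩
  refine (innerDist_le_of_curve (γ := γ ∘ fun t => 1 - t) ⟨?_, ?_, ?_, ?_⟩).trans ?_
  · exact hc.comp (by fun_prop) hmaps
  · exact hm.comp hmaps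
  · simpa using h1
  · simpa using h0
  · exact eVariationOn.comp_le_of_antitoneOn γ _ (fun s _ t _ hst => by linarith) hmaps

theorem innerDist_initial {X : Type*} [PseudoEMetricSpace X] {Ω : Set X} {x y : X} {γ : ℝ → X}
    (h : IsCurveIn Ω x y γ) {t : ℝ} (ht : t ∈ Icc (0:ℝ) 1) :
    innerDist Ω x (γ t) ≤ curveLength γ := by
  obtain ⟨hc, hm, h0, h1⟩ := h
  have hmaps : MapsTo (fun s : ℝ => t * s) (Icc 0 1) (Icc 0 1) := by
    intro s hs
    exact ⟨mul_nonneg ht.1 hs.1, mul_le_one₀ ht.2 hs.1 hs.2⟩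
  refine (innerDist_le_of_curve (γ := γ ∘ fun s => t * s) ⟨?_, ?_, ?_, ?_⟩).trans ?_
  · exact hc.comp (by fun_prop) hmaps
  · exact hm.comp hmaps
  · simpa using h0
  · simp
  · exact eVariationOn.comp_le_of_monotoneOn γ _
      (fun s _ u _ hst => mul_le_mul_of_nonneg_left hst ht.1) hmaps

theorem innerDist_triangle' {X : Type*} [PseudoEMetricSpace X] (Ω : Set X) (x y z : X) :
    innerDist Ω x z ≤ innerDist Ω x y + innerDist Ω y z := by
  have key : ∀ γ δ : ℝ → X, IsCurveIn Ω x y γ → IsCurveIn Ω y z δ →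
      innerDist Ω x z ≤ curveLength γ + curveLength δ := by
    rintro γ δ ⟨hc, hm, h0, h1⟩ ⟨kc, km, k0, k1⟩
    set f : ℝ → X := fun t => if t ≤ 1/2 then γ (2 * t) else δ (2 * t - 1) with hf
    have e1 : EqOn f (γ ∘ fun t => 2 * t) (Icc 0 (1/2)) := by
      intro t ht
      simp only [hf, if_pos ht.2, Function.comp]
    have e2 : EqOn f (δ ∘ fun t => 2 * t - 1) (Icc (1/2) 1) := by
      intro t ht
      rcases eq_or_lt_of_le ht.1 with h | h
      · subst h
        simp [hf, h1, k0]
      · simp only [hf, if_neg (not_le.2 h), Function.comp]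
    have m1 : MapsTo (fun t : ℝ => 2 * t) (Icc 0 (1/2)) (Icc 0 1) := by
      intro t ht
      exact ⟨by linarith [ht.1], by linarith [ht.2]⟩
    have m2 : MapsTo (fun t : ℝ => 2 * t - 1) (Icc (1/2) 1) (Icc 0 1) := by
      intro t ht
      exact ⟨by linarith [ht.1], by linarith [ht.2]⟩
    have hU : Icc (0:ℝ) (1/2) ∪ Icc (1/2) 1 = Icc 0 1 :=
      Icc_union_Icc_eq_Icc (by norm_num) (by norm_num)
    have c1 : ContinuousOn f (Icc 0 (1/2)) :=
      (hc.comp (by fun_prop) m1).congr e1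
    have c2 : ContinuousOn f (Icc (1/2) 1) :=
      (kc.comp (by fun_prop) m2).congr e2
    refine (innerDist_le_of_curve (γ := f) ⟨?_, ?_, ?_, ?_⟩).trans ?_
    · rw [← hU]
      exact c1.union_of_isClosed c2 isClosed_Icc isClosed_Icc
    · rw [← hU]
      exact MapsTo.union ((hm.comp m1).congr e1.symm) ((km.comp m2).congr e2.symm)
    · simp [hf, h0]
    · have : ¬ (1:ℝ) ≤ 1/2 := by norm_num
      simp only [hf, if_neg this]
      norm_num [k1]
    · unfold curveLength
      rw [← hU, eVariationOn.union f (x := 1/2) (isGreatest_Icc (by norm_num))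
        (isLeast_Icc (by norm_num)), eVariationOn.congr e1, eVariationOn.congr e2, hU]
      exact add_le_add
        (eVariationOn.comp_le_of_monotoneOn γ _ (fun s _ u _ h => by linarith) m1)
        (eVariationOn.comp_le_of_monotoneOn δ _ (fun s _ u _ h => by linarith) m2)
  unfold innerDist at key ⊢
  simp only [ENNReal.iInf_add, ENNReal.add_iInf]
  refine le_iInf fun γ => le_iInf fun hγ => le_iInf fun δ => le_iInf fun hδ => ?_
  exact key _ _ ‹_› ‹_›

/-- If the inner ball `B_U(a,3r)` is contained in the subdomain `W ⊆ U`, then the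
inner metrics `d_W` and `d_U` coincide on the inner ball `B_U(a,r)`. -/
theorem statement7 {X : Type*} [MetricSpace X] (W U : Set X)
    (hWopen : IsOpen W) (hWconn : IsConnected W)
    (hUopen : IsOpen U) (hUconn : IsConnected U) (hWU : W ⊆ U)
    (a : X) (ha : a ∈ U) (r : ℝ) (hr : 0 < r)
    (hball : ∀ x ∈ U, innerDist U a x < ENNReal.ofReal (3 * r) → x ∈ W) :
    ∀ y ∈ U, ∀ z ∈ U, innerDist U a y < ENNReal.ofReal r →
      innerDist U a z < ENNReal.ofReal r → innerDist W y z = innerDist U y z := by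
  intro y hy z hz hay haz
  apply le_antisymm
  · apply le_of_forall_gt
    intro c hc
    have h2 : innerDist U y z < ENNReal.ofReal (2 * r) := by
      calc innerDist U y z ≤ innerDist U y a + innerDist U a z := innerDist_triangle' _ _ _ _
        _ ≤ innerDist U a y + innerDist U a z := by gcongr; exact innerDist_symm_le _ _ _
        _ < ENNReal.ofReal r + ENNReal.ofReal r := ENNReal.add_lt_add hay haz
        _ = ENNReal.ofReal (2 * r) := by
          rw [← ENNReal.ofReal_add hr.le hr.le, two_mul]
    have h3 := lt_min hc h2
    rw [innerDist] at h3
    simp only [iInf_lt_iff] at h3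
    obtain ⟨γ, hγ, hl⟩ := h3
    obtain ⟨hlc, hlr⟩ := lt_min_iff.1 hl
    refine lt_of_le_of_lt (innerDist_le_of_curve ⟨hγ.1, fun t ht => ?_, hγ.2.2⟩) hlc
    apply hball _ (hγ.2.1 ht)
    calc innerDist U a (γ t) ≤ innerDist U a y + innerDist U y (γ t) := innerDist_triangle' _ _ _ _
      _ < ENNReal.ofReal r + ENNReal.ofReal (2 * r) :=
        ENNReal.add_lt_add hay ((innerDist_initial hγ ht).trans_lt hlr)
      _ = ENNReal.ofReal (3 * r) := by
        rw [← ENNReal.ofReal_add hr.le (by linarith)]; congr 1; ring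
  · exact le_iInf₂ fun γ h => innerDist_le_of_curve ⟨h.1, h.2.1.mono_right hWU, h.2.2⟩
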